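/- Let (W,S) be a Coxeter system, I, J, K ⊆ S pairwise disjoint and pairwise disconnected, σ : W_I → W_J, x ↦ x*, a Coxeter group isomorphism, W_{I,J} = {x x* : x ∈ W_I}, and W(I,J,K) = W^{J∪K} the set of minimal-length representatives of cosets of W_{J∪K}. Define, for w, w' ∈ W(I,J,K), w' ≤_O w iff there exists u ∈ w' W_K W_{I,J} with u ≤ w (Bruhat order). Then ≤_O is a partial order on W(I,J,K). -/

import Mathlib

section BruhatSetup

variable {B : Type*} {W : Type*} [Group W] {M : CoxeterMatrix B}

/-- Strong Bruhat order: `u ≤ v` iff every reduced word for `v` has a sublist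
that is a reduced word for `u`. -/
def BruhatLE (cs : CoxeterSystem M W) (u v : W) : Prop :=
  ∀ ω : List B, cs.IsReduced ω → cs.wordProd ω = v →
    ∃ ω' : List B, List.Sublist ω' ω ∧ cs.IsReduced ω' ∧ cs.wordProd ω' = u

/-- Strict strong Bruhat order. -/
def BruhatLT (cs : CoxeterSystem M W) (u v : W) : Prop :=
  BruhatLE cs u v ∧ u ≠ v

/-- The standard parabolic subgroup `W_L` generated by the simple reflections in `L`. -/
def parab (cs : CoxeterSystem M W) (L : Set B) : Subgroup W :=
  Subgroup.closure (cs.simple '' L)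

/-- The set `W^L` of minimal length coset representatives for `W / W_L`. -/
def minReps (cs : CoxeterSystem M W) (L : Set B) : Set W :=
  {w : W | ∀ i ∈ L, cs.length w < cs.length (w * cs.simple i)}

/-- Right weak order: `v ≤_R w` iff `ℓ(w) = ℓ(w v⁻¹) + ℓ(v)`. -/
def leR (cs : CoxeterSystem M W) (v w : W) : Prop :=
  cs.length w = cs.length (w * v⁻¹) + cs.length v

/-- The setup of the order `≤_O`: `I`, `J`, `K` are pairwise disjoint and pairwise
disconnected subsets of the simple system (so that `W_{I∪J∪K} = W_I × W_J × W_K`),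
and `σ : x ↦ x*` restricts to an isomorphism of Coxeter groups `W_I → W_J`
(a bijective group homomorphism sending simple reflections to simple reflections). -/
structure GoodSetup (cs : CoxeterSystem M W) (I J K : Set B) (σ : W → W) : Prop where
  disjIJ : Disjoint I J
  disjIK : Disjoint I K
  disjJK : Disjoint J K
  commIJ : ∀ i ∈ I, ∀ j ∈ J, Commute (cs.simple i) (cs.simple j)
  commIK : ∀ i ∈ I, ∀ k ∈ K, Commute (cs.simple i) (cs.simple k)
  commJK : ∀ j ∈ J, ∀ k ∈ K, Commute (cs.simple j) (cs.simple k)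
  directProd : ∀ x ∈ parab cs I, ∀ y ∈ parab cs J, ∀ z ∈ parab cs K,
    x * y * z = 1 → x = 1 ∧ y = 1 ∧ z = 1
  mulSigma : ∀ x ∈ parab cs I, ∀ y ∈ parab cs I, σ (x * y) = σ x * σ y
  bijSigma : Set.BijOn σ (parab cs I : Set W) (parab cs J : Set W)
  simpleSigma : ∀ i ∈ I, ∃ j ∈ J, σ (cs.simple i) = cs.simple j

/-- Membership in the coset `[w] = w · W_K · W_{I,J}` where `W_{I,J} = {x x* : x ∈ W_I}`. -/
def inCoset (cs : CoxeterSystem M W) (I K : Set B) (σ : W → W) (w u : W) : Prop :=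
  ∃ a ∈ parab cs K, ∃ x ∈ parab cs I, u = w * a * (x * σ x)

/-- The relation `≤_O`: `w' ≤_O w` iff some `u ∈ [w']` satisfies `u ≤ w` in Bruhat order. -/
def leO (cs : CoxeterSystem M W) (I K : Set B) (σ : W → W) (w' w : W) : Prop :=
  ∃ u, inCoset cs I K σ w' u ∧ BruhatLE cs u w

/-- The strict relation associated to `≤_O`. -/
def ltO (cs : CoxeterSystem M W) (I K : Set B) (σ : W → W) (w' w : W) : Prop :=
  leO cs I K σ w' w ∧ w' ≠ w

/-- `Min(w)`: the elements of the coset `[w]` of length `ℓ(w)`. -/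
def MinC (cs : CoxeterSystem M W) (I K : Set B) (σ : W → W) (w : W) : Set W :=
  {u : W | inCoset cs I K σ w u ∧ cs.length u = cs.length w}

/-- The set `M` of all elements having minimal length in their coset mod `W_K W_{I,J}`. -/
def Mset (cs : CoxeterSystem M W) (I J K : Set B) (σ : W → W) : Set W :=
  {u : W | ∃ w ∈ minReps cs (J ∪ K), u ∈ MinC cs I K σ w}

/-!
The action of `W` on its reflections, with a sign that records how often a reflection occurs in a
right inversion sequence, shows that the parity of this number does not depend on the word. This
gives a cocycle `η` with `η (u v) t = η v t + η u (v t v⁻¹)` that detects inversions, from which the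
exchange, deletion, subword and lifting properties all follow.

By the lifting property, `u ≤ w` implies that each `x ∈ W_L` has an element `y ≤ x` of `W_L` with
`u y ≤ w x`. If `w ∈ W^J` and `x ∈ W_I`, then `w x ∈ W^J`, so lengths add in `(w x) x*` and
`u y y* ≤ w x x*`. Hence elements below `w` can be carried along to elements below any member of the
coset `[w]`, which is transitivity. For `w ∈ W^{J ∪ K}` the same additivity gives
`ℓ(w) ≤ ℓ(w x) + ℓ(x) = ℓ(w x x*) ≤ ℓ(w x x* a)`, so `w` has minimal length in `[w]`. Therefore
`w ≤_O w' ≤_O w` forces `w' ∈ [w]`, and `W^{J ∪ K}` meets each coset `[w]` at most once.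
-/

section InversionParity

variable (cs : CoxeterSystem M W)

theorem reverse_alternatingWord_two_mul (i j : B) (n : ℕ) :
    (CoxeterSystem.alternatingWord i j (2 * n)).reverse =
      CoxeterSystem.alternatingWord j i (2 * n) := by
  induction n with
  | zero => rfl
  | succ n ih =>
    rw [mul_add_one, CoxeterSystem.alternatingWord_succ' i, CoxeterSystem.alternatingWord_succ' i,
      CoxeterSystem.alternatingWord_succ j, CoxeterSystem.alternatingWord_succ i]
    simp [ih, parity_simps]

theorem prod_map_alternatingWord_two_mul {G : Type*} [Monoid G] (f : B → G) (i j : B) (n : ℕ) :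
    ((CoxeterSystem.alternatingWord i j (2 * n)).map f).prod = (f i * f j) ^ n := by
  induction n with
  | zero => simp [CoxeterSystem.alternatingWord]
  | succ n ih =>
    rw [mul_add_one, CoxeterSystem.alternatingWord_succ', CoxeterSystem.alternatingWord_succ']
    simp [ih, pow_succ', mul_assoc, parity_simps]

theorem leftInvSeq_alternatingWord_two_mul (i j : B) (n : ℕ) :
    cs.leftInvSeq (CoxeterSystem.alternatingWord i j (2 * n)) =
      (List.range (2 * n)).map fun k ↦ cs.simple i * (cs.simple j * cs.simple i) ^ k := by
  refine List.ext_getElem (by simp) fun k hk _ ↦ ?_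
  have hk' : k < 2 * n := by simpa using hk
  have hdiv : (2 * k + 1) / 2 = k := by lia
  rw [cs.getElem_leftInvSeq_alternatingWord i j n k hk', cs.prod_alternatingWord_eq_mul_pow, hdiv]
  simp

variable [DecidableEq W]

theorem even_count_rightInvSeq_alternatingWord (i j : B) (t : W) :
    Even ((cs.rightInvSeq (CoxeterSystem.alternatingWord i j (2 * M i j))).count t) := by
  rw [← reverse_alternatingWord_two_mul, cs.rightInvSeq_reverse, List.count_reverse,
    leftInvSeq_alternatingWord_two_mul, two_mul, List.range_add, List.map_append,
    List.count_append, List.map_map]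
  simp [Function.comp_def, pow_add]

/-- The generators of the *parity representation* of `W` on pairs `(t, ε)`: the simple reflection
`s i` conjugates `t`, and flips the sign `ε` exactly when `t = s i`. -/
def parityStep (i : B) : Function.End (W × ZMod 2) :=
  fun p ↦ (cs.simple i * p.1 * cs.simple i, p.2 + if p.1 = cs.simple i then 1 else 0)

theorem prod_map_parityStep_apply (ω : List B) (t : W) (ε : ZMod 2) :
    (ω.map (parityStep cs)).prod (t, ε) =
      (cs.wordProd ω * t * (cs.wordProd ω)⁻¹, ε + (cs.rightInvSeq ω).count t) := by
  induction ω with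
  | nil =>
    rw [cs.wordProd_nil, one_mul, inv_one, mul_one, cs.rightInvSeq_nil, List.count_nil,
      Nat.cast_zero, add_zero]
    rfl
  | cons i ω ih =>
    have hconj : cs.wordProd ω * t * (cs.wordProd ω)⁻¹ = cs.simple i ↔
        (cs.wordProd ω)⁻¹ * cs.simple i * cs.wordProd ω = t := by
      rw [mul_inv_eq_iff_eq_mul, ← eq_inv_mul_iff_mul_eq, eq_comm, mul_assoc]
    rw [List.map_cons, List.prod_cons]
    change parityStep cs i ((ω.map (parityStep cs)).prod (t, ε)) = _
    rw [ih]
    refine Prod.ext ?_ ?_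
    · simp [parityStep, cs.wordProd_cons, mul_assoc]
    · simp only [parityStep, hconj, CoxeterSystem.rightInvSeq, List.count_cons, beq_iff_eq]
      push_cast
      rw [add_assoc]

theorem isLiftable_parityStep : M.IsLiftable (parityStep cs) := by
  intro i j
  funext ⟨t, ε⟩
  have hcount := even_count_rightInvSeq_alternatingWord cs i j t
  rw [← prod_map_alternatingWord_two_mul, prod_map_parityStep_apply,
    (ZMod.natCast_eq_zero_iff_even).2 hcount, CoxeterSystem.wordProd,
    prod_map_alternatingWord_two_mul, cs.simple_mul_simple_pow,
    one_mul, inv_one, mul_one, add_zero]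
  rfl

/-- The *parity representation* of `W` by permutations of `W × ZMod 2`. Only the pairs `(t, ε)` with
`t` a reflection matter, but the action is defined without this restriction. -/
def parityRep : W →* Function.End (W × ZMod 2) :=
  cs.lift ⟨parityStep cs, isLiftable_parityStep cs⟩

/-- The parity of the number of times that `t` occurs in the right inversion sequence of a word
for `w`. It is read off from the parity representation, and hence independent of the word. -/
def inversionParity (w t : W) : ZMod 2 :=
  (parityRep cs w (t, 0)).2

theorem parityRep_wordProd_apply (ω : List B) (t : W) (ε : ZMod 2) :
    parityRep cs (cs.wordProd ω) (t, ε) =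
      (cs.wordProd ω * t * (cs.wordProd ω)⁻¹, ε + (cs.rightInvSeq ω).count t) := by
  have hstep : parityRep cs ∘ cs.simple = parityStep cs :=
    funext (cs.lift_apply_simple (isLiftable_parityStep cs))
  rw [← prod_map_parityStep_apply, ← hstep, ← List.map_map, ← map_list_prod]
  rfl

theorem inversionParity_wordProd (ω : List B) (t : W) :
    inversionParity cs (cs.wordProd ω) t = (cs.rightInvSeq ω).count t := by
  simp [inversionParity, parityRep_wordProd_apply]

theorem parityRep_apply (w t : W) (ε : ZMod 2) :
    parityRep cs w (t, ε) = (w * t * w⁻¹, ε + inversionParity cs w t) := by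
  obtain ⟨ω, rfl⟩ := cs.wordProd_surjective w
  rw [parityRep_wordProd_apply, inversionParity_wordProd]

theorem inversionParity_mul (u v t : W) :
    inversionParity cs (u * v) t = inversionParity cs v t + inversionParity cs u (v * t * v⁻¹) := by
  have h := parityRep_apply cs (u * v) t 0
  rw [map_mul] at h
  change parityRep cs u (parityRep cs v (t, 0)) = _ at h
  rw [parityRep_apply, parityRep_apply, zero_add, zero_add] at h
  exact (congrArg Prod.snd h).symm

theorem inversionParity_one (t : W) : inversionParity cs 1 t = 0 := by
  simpa using inversionParity_wordProd cs [] t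

theorem inversionParity_simple_self (i : B) :
    inversionParity cs (cs.simple i) (cs.simple i) = 1 := by
  simpa using inversionParity_wordProd cs [i] (cs.simple i)

theorem inversionParity_self {t : W} (ht : cs.IsReflection t) : inversionParity cs t t = 1 := by
  obtain ⟨u, i, rfl⟩ := ht
  have hone := inversionParity_mul cs u u⁻¹ (u * cs.simple i * u⁻¹)
  rw [mul_inv_cancel, inversionParity_one] at hone
  have hconj : u⁻¹ * (u * cs.simple i * u⁻¹) * u⁻¹⁻¹ = cs.simple i := by group
  rw [hconj] at hone
  rw [inversionParity_mul, hconj, inversionParity_mul, inversionParity_simple_self,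
    cs.inv_simple, cs.simple_mul_simple_self, one_mul]
  linear_combination -hone

theorem isRightInversion_of_inversionParity_ne_zero {w t : W} (h : inversionParity cs w t ≠ 0) :
    cs.IsRightInversion w t := by
  obtain ⟨ω, hω, rfl⟩ := cs.exists_isReduced w
  rw [inversionParity_wordProd] at h
  refine cs.isRightInversion_of_mem_rightInvSeq hω (List.count_pos_iff.1 (Nat.pos_of_ne_zero ?_))
  exact fun h0 ↦ h (by simp [h0])

theorem inversionParity_ne_zero_iff {w t : W} :
    inversionParity cs w t ≠ 0 ↔ cs.IsRightInversion w t := by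
  refine ⟨isRightInversion_of_inversionParity_ne_zero cs, fun ⟨ht, hlt⟩ h0 ↦ ?_⟩
  have hinv : cs.IsRightInversion (w * t) t := by
    apply isRightInversion_of_inversionParity_ne_zero
    rw [inversionParity_mul, inversionParity_self cs ht, ht.inv, ht.mul_self, one_mul, h0]
    decide
  exact ht.isRightInversion_mul_left_iff.1 hinv ⟨ht, hlt⟩

end InversionParity

section Exchange

variable {cs : CoxeterSystem M W}

theorem exists_wordProd_eraseIdx_of_isRightInversion {ω : List B} {t : W}
    (h : cs.IsRightInversion (cs.wordProd ω) t) :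
    ∃ k < ω.length, cs.wordProd (ω.eraseIdx k) = cs.wordProd ω * t := by
  classical
  have hparity := (inversionParity_ne_zero_iff cs).2 h
  rw [inversionParity_wordProd] at hparity
  have hmem : t ∈ cs.rightInvSeq ω := by
    by_contra hnot
    exact hparity (by simp [List.count_eq_zero.2 hnot])
  obtain ⟨k, hk, rfl⟩ := List.getElem_of_mem hmem
  refine ⟨k, by simpa using hk, ?_⟩
  rw [← cs.wordProd_mul_getD_rightInvSeq, List.getD_eq_getElem _ _ hk]

theorem isRightInversion_or_of_mul {u v t : W} (h : cs.IsRightInversion (u * v) t) :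
    cs.IsRightInversion v t ∨ cs.IsRightInversion u (v * t * v⁻¹) := by
  classical
  simp only [← inversionParity_ne_zero_iff, inversionParity_mul] at h ⊢
  contrapose! h
  rw [h.1, h.2, add_zero]

end Exchange

section ReducedWords

variable {cs : CoxeterSystem M W}

theorem isReduced_append_singleton_iff {ω : List B} {i : B} :
    cs.IsReduced (ω ++ [i]) ↔ cs.IsReduced ω ∧ ¬cs.IsRightDescent (cs.wordProd ω) i := by
  have hle := cs.length_wordProd_le ω
  have hstep := cs.length_mul_simple (cs.wordProd ω) i
  simp only [CoxeterSystem.IsReduced, cs.not_isRightDescent_iff, cs.wordProd_append,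
    cs.wordProd_singleton, List.length_append, List.length_singleton]
  lia

theorem exists_sublist_isReduced (ω : List B) :
    ∃ ω' : List B, ω'.Sublist ω ∧ cs.IsReduced ω' ∧ cs.wordProd ω' = cs.wordProd ω := by
  induction ω using List.reverseRecOn with
  | nil => exact ⟨[], List.Sublist.refl [], by simp [CoxeterSystem.IsReduced], rfl⟩
  | append_singleton ω i ih =>
    obtain ⟨ω', hsub, hred, hprod⟩ := ih
    by_cases hdesc : cs.IsRightDescent (cs.wordProd ω') i
    · obtain ⟨k, hk, herase⟩ := exists_wordProd_eraseIdx_of_isRightInversion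
        ((cs.isRightInversion_simple_iff_isRightDescent _ i).2 hdesc)
      refine ⟨ω'.eraseIdx k, ((ω'.eraseIdx_sublist k).trans hsub).trans
        (List.sublist_append_left ω [i]), ?_, ?_⟩
      · have hlen := cs.isRightDescent_iff.1 hdesc
        rw [CoxeterSystem.IsReduced, herase, List.length_eraseIdx_of_lt hk, ← hred.eq, ← hlen,
          Nat.add_sub_cancel]
      · rw [herase, hprod, cs.wordProd_append, cs.wordProd_singleton]
    · refine ⟨ω' ++ [i], hsub.append_right [i], isReduced_append_singleton_iff.2 ⟨hred, hdesc⟩, ?_⟩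
      rw [cs.wordProd_append, cs.wordProd_append, hprod]

theorem eq_simple_of_isRightInversion_simple {i : B} {t : W}
    (h : cs.IsRightInversion (cs.simple i) t) : t = cs.simple i := by
  have hlen := h.2
  rw [cs.length_simple, Nat.lt_one_iff, cs.length_eq_zero_iff] at hlen
  rw [← cs.inv_simple i, eq_inv_of_mul_eq_one_right hlen]

end ReducedWords

section Bruhat

variable {cs : CoxeterSystem M W} {u v w : W}

theorem BruhatLE.refl (w : W) : BruhatLE cs w w :=
  fun ω hω hw ↦ ⟨ω, List.Sublist.refl ω, hω, hw⟩

theorem BruhatLE.trans (huv : BruhatLE cs u v) (hvw : BruhatLE cs v w) : BruhatLE cs u w := by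
  intro ω hω hw
  obtain ⟨ω', hsub, hω', hv⟩ := hvw ω hω hw
  obtain ⟨ω'', hsub', hω'', hu⟩ := huv ω' hω' hv
  exact ⟨ω'', hsub'.trans hsub, hω'', hu⟩

theorem BruhatLE.length_le (h : BruhatLE cs u v) : cs.length u ≤ cs.length v := by
  obtain ⟨ω, hω, rfl⟩ := cs.exists_isReduced v
  obtain ⟨ω', hsub, hω', rfl⟩ := h ω hω rfl
  rw [hω.eq, hω'.eq]
  exact hsub.length_le

theorem BruhatLE.eq_of_length_le (h : BruhatLE cs u v) (hlen : cs.length v ≤ cs.length u) :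
    u = v := by
  obtain ⟨ω, hω, rfl⟩ := cs.exists_isReduced v
  obtain ⟨ω', hsub, hω', rfl⟩ := h ω hω rfl
  rw [hω.eq, hω'.eq] at hlen
  rw [hsub.eq_of_length_le hlen]

/-- The directed edges of the Bruhat graph, joining `u = v * t` to `v` for each reflection `t` that
decreases the length of `v`. Paths in this graph serve to show that the subword condition defining
`BruhatLE` does not depend on the choice of a reduced word. -/
def BruhatEdge (cs : CoxeterSystem M W) (u v : W) : Prop :=
  ∃ t, cs.IsRightInversion v t ∧ v * t = u

theorem BruhatEdge.bruhatLE (h : BruhatEdge cs u v) : BruhatLE cs u v := by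
  obtain ⟨t, ht, rfl⟩ := h
  rintro ω - rfl
  obtain ⟨k, -, herase⟩ := exists_wordProd_eraseIdx_of_isRightInversion ht
  obtain ⟨ω', hsub, hred, hprod⟩ := exists_sublist_isReduced (cs := cs) (ω.eraseIdx k)
  exact ⟨ω', hsub.trans (ω.eraseIdx_sublist k), hred, hprod.trans herase⟩

theorem bruhatEdge_mul_simple {i : B} (h : ¬cs.IsRightDescent w i) :
    BruhatEdge cs w (w * cs.simple i) := by
  refine ⟨cs.simple i, (cs.isRightInversion_simple_iff_isRightDescent _ i).2 ?_, by simp⟩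
  rwa [cs.isRightDescent_iff_not_isRightDescent_mul, cs.simple_mul_simple_cancel_right]

theorem BruhatEdge.mul_simple (h : BruhatEdge cs u v) (i : B) :
    u * cs.simple i = v ∨ BruhatEdge cs (u * cs.simple i) (v * cs.simple i) := by
  obtain ⟨t, ht, rfl⟩ := h
  rw [← cs.simple_mul_simple_cancel_right (w := v) i] at ht
  rcases isRightInversion_or_of_mul ht with hsimple | hconj
  · exact .inl (by simp [eq_simple_of_isRightInversion_simple hsimple])
  · exact .inr ⟨_, hconj, by simp [mul_assoc]⟩

open Relation in
theorem reflTransGen_bruhatEdge_mul_simple (h : ReflTransGen (BruhatEdge cs) u v) (i : B) :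
    ReflTransGen (BruhatEdge cs) (u * cs.simple i) v ∨
      ReflTransGen (BruhatEdge cs) (u * cs.simple i) (v * cs.simple i) := by
  induction h with
  | refl => exact .inr .refl
  | tail _ hedge ih =>
    rcases ih with ih | ih
    · exact .inl (ih.tail hedge)
    · rcases hedge.mul_simple i with heq | hedge'
      · exact .inl (heq ▸ ih)
      · exact .inr (ih.tail hedge')

theorem reflTransGen_bruhatEdge_of_sublist {ω ω' : List B} (hω : cs.IsReduced ω)
    (hsub : ω'.Sublist ω) :
    Relation.ReflTransGen (BruhatEdge cs) (cs.wordProd ω') (cs.wordProd ω) := by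
  induction ω using List.reverseRecOn generalizing ω' with
  | nil => rw [List.eq_nil_of_sublist_nil hsub]
  | append_singleton ω i ih =>
    obtain ⟨hred, hdesc⟩ := isReduced_append_singleton_iff.1 hω
    obtain ⟨ω₁, ω₂, rfl, hω₁, hω₂⟩ := List.sublist_append_iff.1 hsub
    have hedge := bruhatEdge_mul_simple hdesc
    rw [cs.wordProd_append, cs.wordProd_append, cs.wordProd_singleton]
    rcases List.sublist_singleton.1 hω₂ with rfl | rfl
    · simpa using (ih hred hω₁).tail hedge
    · rw [cs.wordProd_singleton]
      exact (reflTransGen_bruhatEdge_mul_simple (ih hred hω₁) i).elim (·.tail hedge) id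

theorem bruhatLE_of_reflTransGen (h : Relation.ReflTransGen (BruhatEdge cs) u v) :
    BruhatLE cs u v := by
  induction h with
  | refl => exact .refl u
  | tail _ hedge ih => exact ih.trans hedge.bruhatLE

theorem bruhatLE_wordProd_of_sublist {ω ω' : List B} (hω : cs.IsReduced ω) (hsub : ω'.Sublist ω) :
    BruhatLE cs (cs.wordProd ω') (cs.wordProd ω) :=
  bruhatLE_of_reflTransGen (reflTransGen_bruhatEdge_of_sublist hω hsub)

theorem BruhatLE.mul {u' v' : W} (hu : BruhatLE cs u u') (hv : BruhatLE cs v v')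
    (hlen : cs.length (u' * v') = cs.length u' + cs.length v') :
    BruhatLE cs (u * v) (u' * v') := by
  obtain ⟨ω, hω, rfl⟩ := cs.exists_isReduced u'
  obtain ⟨ξ, hξ, rfl⟩ := cs.exists_isReduced v'
  obtain ⟨ω', hsubω, -, rfl⟩ := hu ω hω rfl
  obtain ⟨ξ', hsubξ, -, rfl⟩ := hv ξ hξ rfl
  have hred : cs.IsReduced (ω ++ ξ) := by
    rw [CoxeterSystem.IsReduced, cs.wordProd_append, hlen, hω.eq, hξ.eq, List.length_append]
  simpa only [cs.wordProd_append] using bruhatLE_wordProd_of_sublist hred (hsubω.append hsubξ)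

theorem BruhatLE.le_mul_simple_or_mul_simple_le (h : BruhatLE cs u v) (i : B) :
    BruhatLE cs u (v * cs.simple i) ∨ BruhatLE cs (u * cs.simple i) (v * cs.simple i) := by
  by_cases hdesc : cs.IsRightDescent v i
  · obtain ⟨ω, hω, hprod⟩ := cs.exists_isReduced (v * cs.simple i)
    have hred : cs.IsReduced (ω ++ [i]) := by
      rw [isReduced_append_singleton_iff, ← hprod]
      exact ⟨hω, cs.isRightDescent_iff_not_isRightDescent_mul.1 hdesc⟩
    have hv : cs.wordProd (ω ++ [i]) = v := by simp [cs.wordProd_append, ← hprod]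
    obtain ⟨ω', hsub, -, rfl⟩ := h _ hred hv
    obtain ⟨ω₁, ω₂, rfl, hω₁, hω₂⟩ := List.sublist_append_iff.1 hsub
    have hle := bruhatLE_wordProd_of_sublist hω hω₁
    rw [hprod]
    rcases List.sublist_singleton.1 hω₂ with rfl | rfl
    · exact .inl (by simpa using hle)
    · exact .inr (by simpa [cs.wordProd_append] using hle)
  · exact .inl (h.trans (bruhatEdge_mul_simple hdesc).bruhatLE)

theorem BruhatLE.exists_sublist_mul_le (h : BruhatLE cs u v) (ω : List B) :
    ∃ ω' : List B, ω'.Sublist ω ∧ BruhatLE cs (u * cs.wordProd ω') (v * cs.wordProd ω) := by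
  induction ω using List.reverseRecOn with
  | nil => exact ⟨[], List.Sublist.refl [], by simpa using h⟩
  | append_singleton ω i ih =>
    obtain ⟨ω', hsub, hle⟩ := ih
    have happend (a : W) (ξ : List B) :
        a * cs.wordProd (ξ ++ [i]) = a * cs.wordProd ξ * cs.simple i := by
      rw [cs.wordProd_append, cs.wordProd_singleton, mul_assoc]
    simp only [happend v]
    rcases hle.le_mul_simple_or_mul_simple_le i with hle' | hle'
    · exact ⟨ω', hsub.trans (List.sublist_append_left ω [i]), hle'⟩
    · exact ⟨ω' ++ [i], hsub.append_right [i], (happend u ω').symm ▸ hle'⟩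

end Bruhat

section Parabolic

variable {cs : CoxeterSystem M W} {L N : Set B} {u v w x y : W}

theorem simple_mem_parab {i : B} (hi : i ∈ L) : cs.simple i ∈ parab cs L :=
  Subgroup.subset_closure (Set.mem_image_of_mem cs.simple hi)

theorem wordProd_mem_parab {ω : List B} (hω : ∀ i ∈ ω, i ∈ L) : cs.wordProd ω ∈ parab cs L :=
  list_prod_mem (List.forall_mem_map.2 fun i hi ↦ simple_mem_parab (hω i hi))

theorem exists_isReduced_of_mem_parab (hx : x ∈ parab cs L) :
    ∃ ω : List B, (∀ i ∈ ω, i ∈ L) ∧ cs.IsReduced ω ∧ cs.wordProd ω = x := by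
  suffices hword : ∃ ω : List B, (∀ i ∈ ω, i ∈ L) ∧ cs.wordProd ω = x by
    obtain ⟨ω, hω, rfl⟩ := hword
    obtain ⟨ω', hsub, hred, hprod⟩ := exists_sublist_isReduced (cs := cs) ω
    exact ⟨ω', fun i hi ↦ hω i (hsub.subset hi), hred, hprod⟩
  induction hx using Subgroup.closure_induction with
  | mem x hx =>
    obtain ⟨i, hi, rfl⟩ := hx
    exact ⟨[i], by simpa using hi, cs.wordProd_singleton i⟩
  | one => exact ⟨[], by simp, cs.wordProd_nil⟩
  | mul x y _ _ ihx ihy =>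
    obtain ⟨ω, hω, rfl⟩ := ihx
    obtain ⟨ξ, hξ, rfl⟩ := ihy
    exact ⟨ω ++ ξ, List.forall_mem_append.2 ⟨hω, hξ⟩, cs.wordProd_append ω ξ⟩
  | inv x _ ih =>
    obtain ⟨ω, hω, rfl⟩ := ih
    exact ⟨ω.reverse, fun i hi ↦ hω i (List.mem_reverse.1 hi), cs.wordProd_reverse ω⟩

theorem commute_of_mem_parab (hcomm : ∀ i ∈ L, ∀ j ∈ N, Commute (cs.simple i) (cs.simple j))
    (hx : x ∈ parab cs L) (hy : y ∈ parab cs N) : Commute x y := by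
  have hle : parab cs L ≤ Subgroup.centralizer (parab cs N : Set W) := by
    rw [parab, parab, Subgroup.centralizer_closure, Subgroup.closure_le]
    rintro _ ⟨i, hi, rfl⟩
    rw [SetLike.mem_coe, Subgroup.mem_centralizer_iff]
    rintro _ ⟨j, hj, rfl⟩
    exact (hcomm i hi j hj).eq.symm
  exact (Subgroup.mem_centralizer_iff.1 (hle hx) y hy).symm

theorem BruhatLE.exists_mem_parab_mul_le (h : BruhatLE cs u v) (hx : x ∈ parab cs L) :
    ∃ y ∈ parab cs L, BruhatLE cs y x ∧ BruhatLE cs (u * y) (v * x) := by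
  obtain ⟨ω, hω, hred, rfl⟩ := exists_isReduced_of_mem_parab hx
  obtain ⟨ω', hsub, hle⟩ := h.exists_sublist_mul_le ω
  exact ⟨cs.wordProd ω', wordProd_mem_parab fun i hi ↦ hω i (hsub.subset hi),
    bruhatLE_wordProd_of_sublist hred hsub, hle⟩

theorem mem_minReps_iff : w ∈ minReps cs L ↔ ∀ i ∈ L, ¬cs.IsRightDescent w i :=
  forall₂_congr fun i _ ↦
    ⟨fun h ↦ h.not_gt, fun h ↦ (not_lt.1 h).lt_of_ne (cs.length_mul_simple_ne w i).symm⟩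

theorem minReps_union : minReps cs (L ∪ N) = minReps cs L ∩ minReps cs N :=
  Set.ext fun _ ↦ by simp [minReps, or_imp, forall_and]

theorem length_mul_of_forall_not_isRightInversion
    (hw : ∀ t ∈ parab cs L, ¬cs.IsRightInversion w t) (hx : x ∈ parab cs L) :
    cs.length (w * x) = cs.length w + cs.length x := by
  obtain ⟨ω, hω, hred, rfl⟩ := exists_isReduced_of_mem_parab hx
  clear hx
  induction ω using List.reverseRecOn with
  | nil => simp
  | append_singleton ω i ih =>
    obtain ⟨hred', hdesc⟩ := isReduced_append_singleton_iff.1 hred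
    obtain ⟨hω', hi⟩ := List.forall_mem_append.1 hω
    have hmem : cs.wordProd ω ∈ parab cs L := wordProd_mem_parab hω'
    have hsimple : cs.simple i ∈ parab cs L := simple_mem_parab (hi i (List.mem_singleton_self i))
    have hdesc' : ¬cs.IsRightDescent (w * cs.wordProd ω) i := by
      rw [← cs.isRightInversion_simple_iff_isRightDescent] at hdesc ⊢
      exact fun h ↦ (isRightInversion_or_of_mul h).elim hdesc
        (hw _ (mul_mem (mul_mem hmem hsimple) (inv_mem hmem)))
    rw [cs.wordProd_append, cs.wordProd_singleton, ← mul_assoc, cs.not_isRightDescent_iff.1 hdesc',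
      cs.not_isRightDescent_iff.1 hdesc, ih hω' hred', add_assoc]

theorem eq_one_of_mem_parab_of_mem_minReps (hx : x ∈ parab cs L) (hmin : x ∈ minReps cs L) :
    x = 1 := by
  obtain ⟨ω, hω, hred, rfl⟩ := exists_isReduced_of_mem_parab hx
  rcases List.eq_nil_or_concat' ω with rfl | ⟨ω', i, rfl⟩
  · exact cs.wordProd_nil
  · have hdesc := mem_minReps_iff.1 hmin i (hω i (by simp))
    rw [cs.wordProd_append, cs.wordProd_singleton, ← cs.isRightDescent_iff_not_isRightDescent_mul]
      at hdesc
    exact absurd hdesc (isReduced_append_singleton_iff.1 hred).2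

theorem eq_one_of_mul_mem_minReps (hw : ∀ t ∈ parab cs L, ¬cs.IsRightInversion w t)
    (hx : x ∈ parab cs L) (hwx : w * x ∈ minReps cs L) : x = 1 := by
  refine eq_one_of_mem_parab_of_mem_minReps hx fun i hi ↦ ?_
  have hlt := hwx i hi
  rwa [mul_assoc, length_mul_of_forall_not_isRightInversion hw hx,
    length_mul_of_forall_not_isRightInversion hw (mul_mem hx (simple_mem_parab hi)),
    Nat.add_lt_add_iff_left] at hlt

theorem not_isRightInversion_of_mem_minReps (hw : w ∈ minReps cs L) {t : W}
    (ht : t ∈ parab cs L) : ¬cs.IsRightInversion w t := by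
  obtain ⟨x, hx, hmin⟩ := exists_minimalFor_of_wellFoundedLT (· ∈ parab cs L)
    (fun x ↦ cs.length (w * x)) ⟨1, one_mem _⟩
  have hinv (t : W) (ht : t ∈ parab cs L) : ¬cs.IsRightInversion (w * x) t := by
    rintro ⟨-, hlt⟩
    rw [mul_assoc] at hlt
    exact hlt.not_ge (hmin (mul_mem hx ht) hlt.le)
  have hone : x⁻¹ = 1 := eq_one_of_mul_mem_minReps hinv (inv_mem hx) (by simpa using hw)
  rw [inv_eq_one] at hone
  simpa [hone] using hinv t ht

theorem length_mul_of_mem_minReps (hw : w ∈ minReps cs L) (hx : x ∈ parab cs L) :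
    cs.length (w * x) = cs.length w + cs.length x :=
  length_mul_of_forall_not_isRightInversion (fun _ ↦ not_isRightInversion_of_mem_minReps hw) hx

theorem not_isRightDescent_of_disjoint_parab (hdisj : Disjoint (parab cs L) (parab cs N))
    (hx : x ∈ parab cs L) {j : B} (hj : j ∈ N) : ¬cs.IsRightDescent x j := by
  intro hdesc
  obtain ⟨ω, hω, -, rfl⟩ := exists_isReduced_of_mem_parab hx
  obtain ⟨k, -, herase⟩ := exists_wordProd_eraseIdx_of_isRightInversion
    ((cs.isRightInversion_simple_iff_isRightDescent _ j).2 hdesc)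
  have hmem : cs.simple j ∈ parab cs L := by
    rw [← Subgroup.mul_mem_cancel_left _ hx, ← herase]
    exact wordProd_mem_parab fun i hi ↦ hω i ((ω.eraseIdx_sublist k).subset hi)
  have hone := Subgroup.disjoint_def.1 hdisj hmem (simple_mem_parab hj)
  simpa [hone] using cs.length_simple j

theorem mul_mem_minReps (hcomm : ∀ i ∈ L, ∀ j ∈ N, Commute (cs.simple i) (cs.simple j))
    (hdisj : Disjoint (parab cs L) (parab cs N)) (hw : w ∈ minReps cs N) (hx : x ∈ parab cs L) :
    w * x ∈ minReps cs N := by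
  refine mem_minReps_iff.2 fun j hj hdesc ↦ ?_
  have hconj : x * cs.simple j * x⁻¹ = cs.simple j := by
    rw [(commute_of_mem_parab hcomm hx (simple_mem_parab hj)).eq, mul_inv_cancel_right]
  rw [← cs.isRightInversion_simple_iff_isRightDescent] at hdesc
  rcases isRightInversion_or_of_mul hdesc with hinv | hinv
  · exact not_isRightDescent_of_disjoint_parab hdisj hx hj
      ((cs.isRightInversion_simple_iff_isRightDescent x j).1 hinv)
  · rw [hconj, cs.isRightInversion_simple_iff_isRightDescent] at hinv
    exact mem_minReps_iff.1 hw j hj hinv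

end Parabolic

section DiagonalCosets

variable {cs : CoxeterSystem M W} {I J K : Set B} {σ : W → W} {a u v w w' x y : W}

namespace GoodSetup

theorem disjoint_parab_IJ (h : GoodSetup cs I J K σ) : Disjoint (parab cs I) (parab cs J) :=
  Subgroup.disjoint_def.2 fun {x} hI hJ ↦
    (h.directProd x hI x⁻¹ (inv_mem hJ) 1 (one_mem _) (by simp)).1

theorem disjoint_parab_IK (h : GoodSetup cs I J K σ) : Disjoint (parab cs I) (parab cs K) :=
  Subgroup.disjoint_def.2 fun {x} hI hK ↦
    (h.directProd x hI 1 (one_mem _) x⁻¹ (inv_mem hK) (by simp)).1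

theorem disjoint_parab_JK (h : GoodSetup cs I J K σ) : Disjoint (parab cs J) (parab cs K) :=
  Subgroup.disjoint_def.2 fun {x} hJ hK ↦
    (h.directProd 1 (one_mem _) x hJ x⁻¹ (inv_mem hK) (by simp)).2.1

theorem sigma_mem (h : GoodSetup cs I J K σ) (hx : x ∈ parab cs I) : σ x ∈ parab cs J :=
  h.bijSigma.mapsTo hx

theorem sigma_one (h : GoodSetup cs I J K σ) : σ 1 = 1 := by
  simpa using h.mulSigma 1 (one_mem _) 1 (one_mem _)

theorem exists_sigma_wordProd (h : GoodSetup cs I J K σ) :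
    ∃ f : B → B, ∀ ω : List B, (∀ i ∈ ω, i ∈ I) →
      σ (cs.wordProd ω) = cs.wordProd (ω.map f) := by
  choose! f hf using h.simpleSigma
  refine ⟨f, fun ω hω ↦ ?_⟩
  induction ω with
  | nil => simpa using h.sigma_one
  | cons i ω ih =>
    obtain ⟨hi, hω'⟩ := List.forall_mem_cons.1 hω
    rw [cs.wordProd_cons, h.mulSigma _ (simple_mem_parab hi) _ (wordProd_mem_parab hω'),
      (hf i hi).2, ih hω', List.map_cons, cs.wordProd_cons]

theorem isReduced_map (h : GoodSetup cs I J K σ) {f : B → B}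
    (hf : ∀ ω : List B, (∀ i ∈ ω, i ∈ I) → σ (cs.wordProd ω) = cs.wordProd (ω.map f))
    {ω : List B} (hω : ∀ i ∈ ω, i ∈ I) (hred : cs.IsReduced ω) : cs.IsReduced (ω.map f) := by
  obtain ⟨_, hsub, hred', hprod⟩ := exists_sublist_isReduced (cs := cs) (ω.map f)
  obtain ⟨ω', hsub', rfl⟩ := List.sublist_map_iff.1 hsub
  have hω' : ∀ i ∈ ω', i ∈ I := fun i hi ↦ hω i (hsub'.subset hi)
  rw [← hf ω' hω', ← hf ω hω] at hprod
  have heq := h.bijSigma.injOn (wordProd_mem_parab hω') (wordProd_mem_parab hω) hprod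
  have hlen : ω.length ≤ ω'.length := by
    rw [← hred.eq, ← heq]
    exact cs.length_wordProd_le ω'
  rwa [hsub'.eq_of_length_le hlen] at hred'

theorem length_sigma (h : GoodSetup cs I J K σ) (hx : x ∈ parab cs I) :
    cs.length (σ x) = cs.length x := by
  obtain ⟨f, hf⟩ := h.exists_sigma_wordProd
  obtain ⟨ω, hω, hred, rfl⟩ := exists_isReduced_of_mem_parab hx
  rw [hf ω hω, (h.isReduced_map hf hω hred).eq, hred.eq, List.length_map]

theorem bruhatLE_sigma (h : GoodSetup cs I J K σ) (hx : x ∈ parab cs I) (hyx : BruhatLE cs y x) :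
    BruhatLE cs (σ y) (σ x) := by
  obtain ⟨f, hf⟩ := h.exists_sigma_wordProd
  obtain ⟨ω, hω, hred, rfl⟩ := exists_isReduced_of_mem_parab hx
  obtain ⟨ω', hsub, -, rfl⟩ := hyx ω hred rfl
  rw [hf ω hω, hf ω' fun i hi ↦ hω i (hsub.subset hi)]
  exact bruhatLE_wordProd_of_sublist (h.isReduced_map hf hω hred) (hsub.map f)

theorem commute_diagonal (h : GoodSetup cs I J K σ) (ha : a ∈ parab cs K) (hx : x ∈ parab cs I) :
    Commute a (x * σ x) :=
  (commute_of_mem_parab h.commIK hx ha).symm.mul_right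
    (commute_of_mem_parab h.commJK (h.sigma_mem hx) ha).symm

theorem diagonal_mul (h : GoodSetup cs I J K σ) (hx : x ∈ parab cs I) (hy : y ∈ parab cs I) :
    (x * y) * σ (x * y) = (x * σ x) * (y * σ y) := by
  rw [h.mulSigma x hx y hy]
  exact (commute_of_mem_parab h.commIJ hy (h.sigma_mem hx)).mul_mul_mul_comm x (σ y)

end GoodSetup

theorem inCoset.refl (h : GoodSetup cs I J K σ) (w : W) : inCoset cs I K σ w w :=
  ⟨1, one_mem _, 1, one_mem _, by simp [h.sigma_one]⟩

theorem inCoset.trans (h : GoodSetup cs I J K σ) (huv : inCoset cs I K σ u v)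
    (hvw : inCoset cs I K σ v w) : inCoset cs I K σ u w := by
  obtain ⟨a, ha, x, hx, rfl⟩ := huv
  obtain ⟨b, hb, y, hy, rfl⟩ := hvw
  refine ⟨a * b, mul_mem ha hb, x * y, mul_mem hx hy, ?_⟩
  rw [h.diagonal_mul hx hy, mul_assoc _ _ b, ← (h.commute_diagonal hb hx).eq]
  simp only [mul_assoc]

theorem inCoset.exists_bruhatLE (h : GoodSetup cs I J K σ) (hw : w ∈ minReps cs J)
    (hv : inCoset cs I K σ w v) (huw : BruhatLE cs u w) :
    ∃ u', inCoset cs I K σ u u' ∧ BruhatLE cs u' v := by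
  obtain ⟨a, ha, x, hx, rfl⟩ := hv
  obtain ⟨y, hy, hyx, huy⟩ := huw.exists_mem_parab_mul_le hx
  have hwx : w * x ∈ minReps cs J := mul_mem_minReps h.commIJ h.disjoint_parab_IJ hw hx
  have hdiag : BruhatLE cs (u * y * σ y) (w * x * σ x) :=
    huy.mul (h.bruhatLE_sigma hx hyx) (length_mul_of_mem_minReps hwx (h.sigma_mem hx))
  obtain ⟨b, hb, -, hle⟩ := hdiag.exists_mem_parab_mul_le ha
  refine ⟨u * b * (y * σ y), ⟨b, hb, y, hy, rfl⟩, ?_⟩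
  simpa only [mul_assoc, (h.commute_diagonal hb hy).eq, (h.commute_diagonal ha hx).eq] using hle

theorem inCoset.length_le (h : GoodSetup cs I J K σ) (hw : w ∈ minReps cs (J ∪ K))
    (hu : inCoset cs I K σ w u) : cs.length w ≤ cs.length u := by
  obtain ⟨a, ha, x, hx, rfl⟩ := hu
  rw [minReps_union] at hw
  have hwxJ : w * x ∈ minReps cs J := mul_mem_minReps h.commIJ h.disjoint_parab_IJ hw.1 hx
  have hwxK : w * x ∈ minReps cs K := mul_mem_minReps h.commIK h.disjoint_parab_IK hw.2 hx
  have hdiag : w * x * σ x ∈ minReps cs K :=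
    mul_mem_minReps h.commJK h.disjoint_parab_JK hwxK (h.sigma_mem hx)
  calc cs.length w ≤ cs.length (w * x) + cs.length x := cs.length_le_length_mul_add_right w x
    _ = cs.length (w * x * σ x) := by
      rw [length_mul_of_mem_minReps hwxJ (h.sigma_mem hx), h.length_sigma hx]
    _ ≤ cs.length (w * x * σ x) + cs.length a := Nat.le_add_right _ _
    _ = cs.length (w * x * σ x * a) := (length_mul_of_mem_minReps hdiag ha).symm
    _ = cs.length (w * a * (x * σ x)) := by
      rw [mul_assoc w a, (h.commute_diagonal ha hx).eq]
      simp only [mul_assoc]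

theorem inCoset.eq_of_mem_minReps (h : GoodSetup cs I J K σ) (hw : w ∈ minReps cs (J ∪ K))
    (hw' : w' ∈ minReps cs (J ∪ K)) (hcoset : inCoset cs I K σ w w') : w = w' := by
  obtain ⟨a, ha, x, hx, rfl⟩ := hcoset
  have hwx : w * x ∈ minReps cs (J ∪ K) := by
    rw [minReps_union] at hw ⊢
    exact ⟨mul_mem_minReps h.commIJ h.disjoint_parab_IJ hw.1 hx,
      mul_mem_minReps h.commIK h.disjoint_parab_IK hw.2 hx⟩
  have hmem : σ x * a ∈ parab cs (J ∪ K) :=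
    mul_mem (Subgroup.closure_mono (Set.image_mono Set.subset_union_left) (h.sigma_mem hx))
      (Subgroup.closure_mono (Set.image_mono Set.subset_union_right) ha)
  have hone : σ x * a = 1 := by
    refine eq_one_of_mul_mem_minReps (fun _ ↦ not_isRightInversion_of_mem_minReps hwx) hmem ?_
    simpa only [mul_assoc, (h.commute_diagonal ha hx).eq] using hw'
  obtain ⟨-, hσx, rfl⟩ :=
    h.directProd 1 (one_mem _) (σ x) (h.sigma_mem hx) a ha (by rwa [one_mul])
  have hx1 : x = 1 := h.bijSigma.injOn hx (one_mem _) (hσx.trans h.sigma_one.symm)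
  simp [hx1, h.sigma_one]

theorem leO_refl (h : GoodSetup cs I J K σ) (w : W) : leO cs I K σ w w :=
  ⟨w, .refl h w, .refl w⟩

theorem leO_length_le (h : GoodSetup cs I J K σ) (hw : w ∈ minReps cs (J ∪ K))
    (hwv : leO cs I K σ w v) : cs.length w ≤ cs.length v := by
  obtain ⟨u, hu, huv⟩ := hwv
  exact (hu.length_le h hw).trans huv.length_le

theorem leO_antisymm (h : GoodSetup cs I J K σ) (hw : w ∈ minReps cs (J ∪ K))
    (hw' : w' ∈ minReps cs (J ∪ K)) (hle : leO cs I K σ w w') (hge : leO cs I K σ w' w) :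
    w = w' := by
  obtain ⟨u, hu, huw'⟩ := hle
  have hlen : cs.length w' ≤ cs.length u := (leO_length_le h hw' hge).trans (hu.length_le h hw)
  obtain rfl := huw'.eq_of_length_le hlen
  exact hu.eq_of_mem_minReps h hw hw'

theorem leO_trans (h : GoodSetup cs I J K σ) (hv : v ∈ minReps cs J)
    (huv : leO cs I K σ u v) (hvw : leO cs I K σ v w) : leO cs I K σ u w := by
  obtain ⟨u₁, hu₁, hu₁v⟩ := huv
  obtain ⟨v₁, hv₁, hv₁w⟩ := hvw
  obtain ⟨u₂, hu₂, hu₂v₁⟩ := hv₁.exists_bruhatLE h hv hu₁v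
  exact ⟨u₂, hu₁.trans h hu₂, hu₂v₁.trans hv₁w⟩

end DiagonalCosets

theorem statement_3 (cs : CoxeterSystem M W) (I J K : Set B) (σ : W → W)
    (h : GoodSetup cs I J K σ) :
    (∀ w ∈ minReps cs (J ∪ K), leO cs I K σ w w) ∧
    (∀ w ∈ minReps cs (J ∪ K), ∀ w' ∈ minReps cs (J ∪ K),
      leO cs I K σ w' w → leO cs I K σ w w' → w' = w) ∧
    (∀ w₁ ∈ minReps cs (J ∪ K), ∀ w₂ ∈ minReps cs (J ∪ K), ∀ w₃ ∈ minReps cs (J ∪ K),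
      leO cs I K σ w₁ w₂ → leO cs I K σ w₂ w₃ → leO cs I K σ w₁ w₃) := by
  refine ⟨fun w _ ↦ leO_refl h w, fun w hw w' hw' ↦ leO_antisymm h hw' hw, ?_⟩
  intro w₁ _ w₂ hw₂ w₃ _
  rw [minReps_union] at hw₂
  exact leO_trans h hw₂.1

end BruhatSetup
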